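/- (Structure of the RWG indicator processes.) Let i_n = 1_{S_n∈V_{0,0}∪V_{0,1}} − 1_{S_n∈V_{1,0}∪V_{1,1}}, j_n = 1_{S_n∈V_{0,0}∪V_{1,0}} − 1_{S_n∈V_{0,1}∪V_{1,1}}, k_n = 1_{S_n∈V_{0,0}∪V_{1,1}} − 1_{S_n∈V_{0,1}∪V_{1,0}}. Then: (i) for every n ≥ 0, almost surely i_n = (−1)^n, i_n·j_n = k_n, j_n·k_n = i_n, i_n·k_n = j_n; (ii) for every n ≥ 0, almost surely E[j_{n+1} | F_n] = p − (1−p)·j_n and E[k_{n+1} | F_n] = (1−p)·k_n − p·i_n. -/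

import Mathlib

open MeasureTheory ProbabilityTheory Real Filter Set
open scoped BigOperators NNReal

noncomputable section

namespace RWG

abbrev E : Type := EuclideanSpace ℝ (Fin 3)

def vec (x y z : ℝ) : E := (EuclideanSpace.equiv (Fin 3) ℝ).symm ![x, y, z]

/-- The four families of vertices of the `2h` graphite lattice. -/
def V (a h : ℝ) (i j : Fin 2) : Set E :=
  {v | ∃ k l n : ℤ, v =
    vec (a * ((-1 : ℝ) ^ ((i : ℕ) + 1) * (if j = 1 then (1 : ℝ) else 0) + (3 / 2) * k))
        (a * ((Real.sqrt 3 / 2) * k + Real.sqrt 3 * l))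
        (h * (2 * n + (if i ≠ j then (1 : ℝ) else 0)))}

/-- Horizontal jump from a vertex of horizontal type `i` in direction `k`. -/
def w (a : ℝ) (i : Fin 2) (k : Fin 3) : E :=
  vec (a * Real.cos (2 * (k : ℕ) * π / 3 + (i : ℕ) * π))
      (a * Real.sin (2 * (k : ℕ) * π / 3 + (i : ℕ) * π)) 0

/-- `S` is a random walk on graphite with parameters `a, h, p, α, q` and natural filtration `F`. -/
structure IsRWG {Ω : Type} [MeasurableSpace Ω] (P : Measure Ω)
    (a h p α : ℝ) (q : Fin 2 → Fin 2 → Fin 3 → ℝ)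
    (S : ℕ → Ω → E) (F : ℕ → MeasurableSpace Ω) : Prop where
  prob : IsProbabilityMeasure P
  ha : 0 < a
  hh : 0 < h
  hp0 : 0 ≤ p
  hp1 : p ≤ 1
  hα0 : 0 < α
  hα1 : α < 1
  hq : ∀ i j k, 0 ≤ q i j k
  hqsum0 : ∀ i, q i 0 0 + q i 0 1 + q i 0 2 = 1 - p
  hqsum1 : ∀ i, q i 1 0 + q i 1 1 + q i 1 2 = 1
  hS0 : ∀ ω, S 0 ω = 0
  hSmeas : ∀ n, Measurable (S n)
  hF : ∀ n, F n =
    MeasurableSpace.comap (fun ω (k : Fin n) => S ((k : ℕ) + 1) ω - S (k : ℕ) ω)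
      MeasurableSpace.pi
  hTrans : ∀ (n : ℕ) (f : E → ℝ), Measurable f → (∃ C, ∀ x, |f x| ≤ C) →
    P[fun ω => f (S (n + 1) ω)|F n] =ᵐ[P]
      fun ω => ∑ i : Fin 2,
        ((V a h i 0).indicator (fun _ => (1 : ℝ)) (S n ω) *
          (α * p * f (S n ω + vec 0 0 h) + (1 - α) * p * f (S n ω + vec 0 0 (-h)) +
            ∑ k : Fin 3, q i 0 k * f (S n ω + w a i k)) +
        (V a h i 1).indicator (fun _ => (1 : ℝ)) (S n ω) *
          ∑ k : Fin 3, q i 1 k * f (S n ω + w a i k))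

def uu (q : Fin 2 → Fin 2 → Fin 3 → ℝ) (i j : Fin 2) : ℝ := q i j 1 + q i j 2

def vv (q : Fin 2 → Fin 2 → Fin 3 → ℝ) (i j : Fin 2) : ℝ := q i j 1 - q i j 2

def ss (q : Fin 2 → Fin 2 → Fin 3 → ℝ) (i j : Fin 2) : ℝ := uu q i j * (1 - uu q i j)

def tt (q : Fin 2 → Fin 2 → Fin 3 → ℝ) (i j : Fin 2) : ℝ := vv q i j * (uu q i j - 1)

/-- The vector `μ` of the RWG. -/
def muG (a h p α : ℝ) (q : Fin 2 → Fin 2 → Fin 3 → ℝ) : E :=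
  vec (3 * a / 8 * (-(uu q 0 0 + uu q 0 1) + (uu q 1 0 + uu q 1 1)))
      (a * Real.sqrt 3 / 8 * ((vv q 0 0 + vv q 0 1) - (vv q 1 0 + vv q 1 1)))
      (h * p / 2 * (2 * α - 1))

/-- The vector `m` of the RWG. -/
def mG (a h p α : ℝ) (q : Fin 2 → Fin 2 → Fin 3 → ℝ) : E :=
  vec (3 * a / 8 * (-(uu q 0 0 - uu q 0 1) + (uu q 1 0 - uu q 1 1)))
      (a * Real.sqrt 3 / 8 * ((vv q 0 0 - vv q 0 1) - (vv q 1 0 - vv q 1 1)))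
      (h * p / 2 * (2 * α - 1))

/-- The vector `θ` of the RWG. -/
def thetaG (a p : ℝ) (q : Fin 2 → Fin 2 → Fin 3 → ℝ) : E :=
  vec (a * ((1 - p / 2) - 3 / 8 * ((uu q 0 0 + uu q 0 1) + (uu q 1 0 + uu q 1 1))))
      (a * Real.sqrt 3 / 8 * ((vv q 0 0 + vv q 0 1) + (vv q 1 0 + vv q 1 1))) 0

/-- The vector `ρ` of the RWG. -/
def rhoG (a p : ℝ) (q : Fin 2 → Fin 2 → Fin 3 → ℝ) : E :=
  vec (a * (-(p / 2) - 3 / 8 * ((uu q 0 0 - uu q 0 1) + (uu q 1 0 - uu q 1 1))))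
      (a * Real.sqrt 3 / 8 * ((vv q 0 0 - vv q 0 1) + (vv q 1 0 - vv q 1 1))) 0

/-- The vector `ζ = (0, 0, hp(2α−1))`. -/
def zetaG (h p α : ℝ) : E := vec 0 0 (h * p * (2 * α - 1))

/-- The indicator process `i_n`. -/
def iP {Ω : Type} (a h : ℝ) (S : ℕ → Ω → E) (n : ℕ) (ω : Ω) : ℝ :=
  (V a h 0 0 ∪ V a h 0 1).indicator (fun _ => (1 : ℝ)) (S n ω) -
    (V a h 1 0 ∪ V a h 1 1).indicator (fun _ => (1 : ℝ)) (S n ω)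

/-- The indicator process `j_n`. -/
def jP {Ω : Type} (a h : ℝ) (S : ℕ → Ω → E) (n : ℕ) (ω : Ω) : ℝ :=
  (V a h 0 0 ∪ V a h 1 0).indicator (fun _ => (1 : ℝ)) (S n ω) -
    (V a h 0 1 ∪ V a h 1 1).indicator (fun _ => (1 : ℝ)) (S n ω)

/-- The indicator process `k_n`. -/
def kP {Ω : Type} (a h : ℝ) (S : ℕ → Ω → E) (n : ℕ) (ω : Ω) : ℝ :=
  (V a h 0 0 ∪ V a h 1 1).indicator (fun _ => (1 : ℝ)) (S n ω) -
    (V a h 0 1 ∪ V a h 1 0).indicator (fun _ => (1 : ℝ)) (S n ω)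

/-- The matrix `σ²` of the RWG. -/
def sigmaG (a h p α : ℝ) (q : Fin 2 → Fin 2 → Fin 3 → ℝ) : Matrix (Fin 3) (Fin 3) ℝ :=
  !![a ^ 2 / 4 * (2 * p * (1 - p) + 9 / 4 * (ss q 0 0 + ss q 1 0 + ss q 0 1 + ss q 1 1)
        - 3 * p * (uu q 0 0 + uu q 1 0)),
     a ^ 2 * Real.sqrt 3 / 16 * (3 * (tt q 0 0 + tt q 1 0 + tt q 0 1 + tt q 1 1)
        + 2 * p * (vv q 0 0 + vv q 1 0)),
     a * h / 8 * (-4 * p * (1 - p) * (2 * α - 1)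
        + 3 * p * (2 * α - 1) * (uu q 0 0 + uu q 1 0));
     a ^ 2 * Real.sqrt 3 / 16 * (3 * (tt q 0 0 + tt q 1 0 + tt q 0 1 + tt q 1 1)
        + 2 * p * (vv q 0 0 + vv q 1 0)),
     3 * a ^ 2 / 16 * ((uu q 0 0 + uu q 1 0 + uu q 0 1 + uu q 1 1)
        - ((vv q 0 0) ^ 2 + (vv q 1 0) ^ 2 + (vv q 0 1) ^ 2 + (vv q 1 1) ^ 2)),
     -(a * h * Real.sqrt 3 / 8) * (p * (2 * α - 1) * (vv q 0 0 + vv q 1 0));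
     a * h / 8 * (-4 * p * (1 - p) * (2 * α - 1)
        + 3 * p * (2 * α - 1) * (uu q 0 0 + uu q 1 0)),
     -(a * h * Real.sqrt 3 / 8) * (p * (2 * α - 1) * (vv q 0 0 + vv q 1 0)),
     h ^ 2 * p / 2 * (1 - p * (2 * α - 1) ^ 2)]

/-- The matrix `γ` of the RWG. -/
def gammaG (a h p α : ℝ) (q : Fin 2 → Fin 2 → Fin 3 → ℝ) : Matrix (Fin 3) (Fin 3) ℝ :=
  !![a ^ 2 / 4 * (2 * p * (1 - p) + 9 / 4 * (ss q 0 0 + ss q 1 0 - ss q 0 1 - ss q 1 1)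
        - 3 * p * (uu q 0 0 + uu q 1 0)),
     a ^ 2 * Real.sqrt 3 / 16 * (3 * (tt q 0 0 + tt q 1 0 - tt q 0 1 - tt q 1 1)
        + 2 * p * (vv q 0 0 + vv q 1 0)),
     a * h / 8 * (-4 * p * (1 - p) * (2 * α - 1)
        + 3 * p * (2 * α - 1) * (uu q 0 0 + uu q 1 0));
     a ^ 2 * Real.sqrt 3 / 16 * (3 * (tt q 0 0 + tt q 1 0 - tt q 0 1 - tt q 1 1)
        + 2 * p * (vv q 0 0 + vv q 1 0)),
     3 * a ^ 2 / 16 * ((uu q 0 0 + uu q 1 0 - uu q 0 1 - uu q 1 1)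
        - ((vv q 0 0) ^ 2 + (vv q 1 0) ^ 2 - (vv q 0 1) ^ 2 - (vv q 1 1) ^ 2)),
     -(a * h * Real.sqrt 3 / 8) * (p * (2 * α - 1) * (vv q 0 0 + vv q 1 0));
     a * h / 8 * (-4 * p * (1 - p) * (2 * α - 1)
        + 3 * p * (2 * α - 1) * (uu q 0 0 + uu q 1 0)),
     -(a * h * Real.sqrt 3 / 8) * (p * (2 * α - 1) * (vv q 0 0 + vv q 1 0)),
     h ^ 2 * p / 2 * (1 - p * (2 * α - 1) ^ 2)]

/-- The matrix `δ` of the RWG. -/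
def deltaG (a h p α : ℝ) (q : Fin 2 → Fin 2 → Fin 3 → ℝ) : Matrix (Fin 3) (Fin 3) ℝ :=
  !![a ^ 2 / 4 * (9 / 4 * (ss q 0 0 - ss q 1 0 - ss q 0 1 + ss q 1 1)
        - 3 * p * (uu q 0 0 - uu q 1 0)),
     a ^ 2 * Real.sqrt 3 / 16 * (3 * (tt q 0 0 - tt q 1 0 - tt q 0 1 + tt q 1 1)
        + 2 * p * (vv q 0 0 - vv q 1 0)),
     a * h / 8 * (3 * p * (2 * α - 1) * (uu q 0 0 - uu q 1 0));
     a ^ 2 * Real.sqrt 3 / 16 * (3 * (tt q 0 0 - tt q 1 0 - tt q 0 1 + tt q 1 1)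
        + 2 * p * (vv q 0 0 - vv q 1 0)),
     3 * a ^ 2 / 16 * ((uu q 0 0 - uu q 1 0 - uu q 0 1 + uu q 1 1)
        - ((vv q 0 0) ^ 2 - (vv q 1 0) ^ 2 - (vv q 0 1) ^ 2 + (vv q 1 1) ^ 2)),
     -(a * h * Real.sqrt 3 / 8) * (p * (2 * α - 1) * (vv q 0 0 - vv q 1 0));
     a * h / 8 * (3 * p * (2 * α - 1) * (uu q 0 0 - uu q 1 0)),
     -(a * h * Real.sqrt 3 / 8) * (p * (2 * α - 1) * (vv q 0 0 - vv q 1 0)),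
     0]

/-- A probability measure on `ℝ³` is the centered Gaussian law with covariance matrix `Γ`
if every linear functional pushes it to the corresponding one-dimensional Gaussian law. -/
def IsCenteredGaussian (G : Measure E) (Γ : Matrix (Fin 3) (Fin 3) ℝ) : Prop :=
  IsProbabilityMeasure G ∧
    ∀ u : Fin 3 → ℝ, G.map (fun x => ∑ r, u r * x r) =
      gaussianReal 0 (Real.toNNReal (∑ r, ∑ c, u r * Γ r c * u c))

/-- View a point of `ℝ³` as a plain function on indices. -/
def toFun (x : E) : Fin 3 → ℝ := x

end RWG

/-! A jump from `V i j` leads to `V (i + 1) (j + 1)` if it is horizontal and to `V (i + 1) 0` if it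
is vertical, whatever its direction, so the class `(i, j)` of the position is itself a Markov chain.
Under its transition operator the functions `(-1) ^ i`, `(-1) ^ j` and `(-1) ^ i * (-1) ^ j`, whose
values along the walk are `i_n`, `j_n` and `k_n`, become `-(-1) ^ i`, `p - (1 - p) * (-1) ^ j` and
`(1 - p) * (-1) ^ i * (-1) ^ j - p * (-1) ^ i`. The first identity gives `i_n = (-1) ^ n` by
induction, since a variable with values in `[-1, 1]` and conditional mean `±1` is constant; in
particular `i_n ≠ 0`, so the walk almost surely stays on the lattice. -/

section ConditionalExpectation

variable {Ω : Type*} {m mΩ : MeasurableSpace Ω} {P : Measure Ω}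

lemma ae_eq_of_ae_le_of_condExp_ae_eq (hm : m ≤ mΩ) [SigmaFinite (P.trim hm)] {f g : Ω → ℝ}
    (hf : Integrable f P) (hg : Integrable g P) (hle : f ≤ᵐ[P] g) (hfg : P[f | m] =ᵐ[P] P[g | m]) :
    f =ᵐ[P] g := by
  rw [← integral_eq_iff_of_ae_le hf hg hle, ← integral_condExp hm, ← integral_condExp hm (f := g)]
  exact integral_congr_ae hfg

lemma ae_eq_const_of_abs_le_of_condExp_ae_eq [IsFiniteMeasure P] (hm : m ≤ mΩ) {f : Ω → ℝ}
    {c : ℝ} (hf : AEStronglyMeasurable f P) (hle : ∀ᵐ ω ∂P, |f ω| ≤ |c|)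
    (hfc : P[f | m] =ᵐ[P] fun _ => c) : f =ᵐ[P] fun _ => c := by
  have hint : Integrable f P := .of_bound hf |c| hle
  have hcond : P[f | m] =ᵐ[P] P[fun _ => c | m] := by rwa [condExp_const hm]
  rcases le_total 0 c with hc | hc
  · have hle_c : f ≤ᵐ[P] fun _ => c :=
      hle.mono fun ω hω => (abs_le.1 (hω.trans_eq (abs_of_nonneg hc))).2
    exact ae_eq_of_ae_le_of_condExp_ae_eq hm hint (integrable_const c) hle_c hcond
  · have hc_le : (fun _ => c) ≤ᵐ[P] f :=
      hle.mono fun ω hω => by simpa [abs_of_nonpos hc] using (abs_le.1 hω).1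
    exact (ae_eq_of_ae_le_of_condExp_ae_eq hm (integrable_const c) hint hc_le hcond.symm).symm

end ConditionalExpectation

namespace RWG

lemma vec_add_vec (x y z x' y' z' : ℝ) :
    vec x y z + vec x' y' z' = vec (x + x') (y + y') (z + z') := by
  ext r
  fin_cases r <;> simp [vec]

lemma vec_inj {x y z x' y' z' : ℝ} :
    vec x y z = vec x' y' z' ↔ x = x' ∧ y = y' ∧ z = z' := by
  simp [vec]

section Lattice

variable {a h : ℝ} {i j i' j' : Fin 2} {x : E}

lemma exists_cos_sin_two_mul_pi_div_three (r : Fin 3) :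
    ∃ k l : ℤ, cos (2 * (r : ℕ) * π / 3) = 1 + 3 / 2 * k ∧
      sin (2 * (r : ℕ) * π / 3) = √3 / 2 * k + √3 * l := by
  have angle_one : 2 * π / 3 = π - π / 3 := by ring
  have angle_two : 2 * 2 * π / 3 = π / 3 + π := by ring
  fin_cases r
  · exact ⟨0, 0, by simp, by simp⟩
  · refine ⟨-1, 1, ?_, ?_⟩
    · simp only [Nat.cast_one, mul_one, angle_one, cos_pi_sub, cos_pi_div_three]
      norm_num
    · simp only [Nat.cast_one, mul_one, angle_one, sin_pi_sub, sin_pi_div_three]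
      push_cast
      ring
  · refine ⟨-1, 0, ?_, ?_⟩
    · simp only [Nat.cast_ofNat, angle_two, cos_add_pi, cos_pi_div_three]
      norm_num
    · simp only [Nat.cast_ofNat, angle_two, sin_add_pi, sin_pi_div_three]
      push_cast
      ring

lemma exists_w_eq_vec (a : ℝ) (i : Fin 2) (r : Fin 3) :
    ∃ k l : ℤ, w a i r = vec (a * ((-1) ^ (i : ℕ) * (1 + 3 / 2 * k)))
      (a * ((-1) ^ (i : ℕ) * (√3 / 2 * k + √3 * l))) 0 := by
  obtain ⟨k, l, hcos, hsin⟩ := exists_cos_sin_two_mul_pi_div_three r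
  exact ⟨k, l, by rw [w, cos_add_nat_mul_pi, sin_add_nat_mul_pi, hcos, hsin]⟩

lemma add_up_mem_V (hx : x ∈ V a h i 0) : x + vec 0 0 h ∈ V a h (i + 1) 0 := by
  obtain ⟨k, l, n, rfl⟩ := hx
  refine ⟨k, l, n + (i : ℕ), ?_⟩
  rw [vec_add_vec, vec_inj]
  fin_cases i <;> simp <;> ring

lemma add_down_mem_V (hx : x ∈ V a h i 0) : x + vec 0 0 (-h) ∈ V a h (i + 1) 0 := by
  obtain ⟨k, l, n, rfl⟩ := hx
  refine ⟨k, l, n + (i : ℕ) - 1, ?_⟩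
  rw [vec_add_vec, vec_inj]
  fin_cases i <;> simp <;> ring

lemma add_w_mem_V (hx : x ∈ V a h i j) (r : Fin 3) : x + w a i r ∈ V a h (i + 1) (j + 1) := by
  obtain ⟨k, l, n, rfl⟩ := hx
  obtain ⟨k', l', hw⟩ := exists_w_eq_vec a i r
  refine ⟨k + (-1) ^ (i : ℕ) * k', l + (-1) ^ (i : ℕ) * l', n, ?_⟩
  rw [hw, vec_add_vec, vec_inj]
  fin_cases i <;> fin_cases j <;> simp <;> constructor <;> ring

lemma zero_mem_V (a h : ℝ) : (0 : E) ∈ V a h 0 0 := by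
  refine ⟨0, 0, 0, ?_⟩
  ext r
  fin_cases r <;> simp [vec]

lemma eq_and_eq_of_mem_V (ha : a ≠ 0) (hh : h ≠ 0) (hx : x ∈ V a h i j)
    (hx' : x ∈ V a h i' j') : i = i' ∧ j = j' := by
  obtain ⟨k, l, n, rfl⟩ := hx
  obtain ⟨k', l', n', hvec⟩ := hx'
  obtain ⟨hfst, -, hthd⟩ := vec_inj.1 hvec
  -- The first coordinate modulo `3 a / 2` and the third modulo `2 h` determine the class.
  have hmod_three : 2 * ((-1) ^ ((i : ℕ) + 1) * (if j = 1 then (1 : ℤ) else 0)) + 3 * k =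
      2 * ((-1) ^ ((i' : ℕ) + 1) * (if j' = 1 then (1 : ℤ) else 0)) + 3 * k' := by
    apply Int.cast_injective (α := ℝ)
    push_cast
    linear_combination 2 * mul_left_cancel₀ ha hfst
  have hmod_two : 2 * n + (if i ≠ j then (1 : ℤ) else 0) =
      2 * n' + (if i' ≠ j' then (1 : ℤ) else 0) := by
    exact_mod_cast mul_left_cancel₀ hh hthd
  clear hvec hfst hthd
  fin_cases i <;> fin_cases j <;> fin_cases i' <;> fin_cases j' <;>
    simp at hmod_three hmod_two ⊢ <;> omega

lemma disjoint_V (ha : a ≠ 0) (hh : h ≠ 0) (hne : ¬(i = i' ∧ j = j')) :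
    Disjoint (V a h i j) (V a h i' j') :=
  Set.disjoint_left.2 fun _ hx hx' => hne (eq_and_eq_of_mem_V ha hh hx hx')

lemma countable_V (a h : ℝ) (i j : Fin 2) : (V a h i j).Countable := by
  refine (Set.countable_range fun t : ℤ × ℤ × ℤ => vec
    (a * ((-1 : ℝ) ^ ((i : ℕ) + 1) * (if j = 1 then (1 : ℝ) else 0) + (3 / 2) * t.1))
    (a * ((√3 / 2) * t.1 + √3 * t.2.1))
    (h * (2 * t.2.2 + (if i ≠ j then (1 : ℝ) else 0)))).mono ?_
  rintro _ ⟨k, l, n, rfl⟩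
  exact ⟨(k, l, n), rfl⟩

end Lattice

section TypeFunctions

variable {a h : ℝ} {i j : Fin 2} {x : E}

/-- The function on `ℝ³` whose value is `g i j` on `V i j` and `0` off the lattice. -/
def typeFun (a h : ℝ) (g : Fin 2 → Fin 2 → ℝ) (x : E) : ℝ :=
  ∑ i, ∑ j, (V a h i j).indicator (fun _ => 1) x * g i j

lemma typeFun_of_mem (ha : a ≠ 0) (hh : h ≠ 0) (g : Fin 2 → Fin 2 → ℝ) (hx : x ∈ V a h i j) :
    typeFun a h g x = g i j := by
  have hnotMem {i' j' : Fin 2} (hne : ¬(i = i' ∧ j = j')) : x ∉ V a h i' j' :=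
    (disjoint_V ha hh hne).notMem_of_mem_left hx
  rw [typeFun, Fintype.sum_eq_single i, Fintype.sum_eq_single j]
  · simp [hx]
  · intro j' hj
    simp [hnotMem fun hij => hj hij.2.symm]
  · intro i' hi
    simp [hnotMem fun hij => hi hij.1.symm]

lemma typeFun_of_forall_notMem (g : Fin 2 → Fin 2 → ℝ) (hx : ∀ i j, x ∉ V a h i j) :
    typeFun a h g x = 0 := by
  simp [typeFun, hx]

lemma abs_typeFun_le (ha : a ≠ 0) (hh : h ≠ 0) {g : Fin 2 → Fin 2 → ℝ} {C : ℝ}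
    (hg : ∀ i j, |g i j| ≤ C) (x : E) : |typeFun a h g x| ≤ C := by
  by_cases hx : ∃ i j, x ∈ V a h i j
  · obtain ⟨i, j, hx⟩ := hx
    simpa only [typeFun_of_mem ha hh g hx] using hg i j
  · push Not at hx
    simpa only [typeFun_of_forall_notMem g hx, abs_zero] using (abs_nonneg _).trans (hg 0 0)

lemma measurable_typeFun (a h : ℝ) (g : Fin 2 → Fin 2 → ℝ) : Measurable (typeFun a h g) :=
  Finset.measurable_fun_sum _ fun i _ => Finset.measurable_fun_sum _ fun j _ =>
    (measurable_const.indicator (countable_V a h i j).measurableSet).mul_const _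

/-- The transition operator of the Markov chain formed by the classes `(i, j)` of the positions of
the walk. -/
def typeStep (p : ℝ) (g : Fin 2 → Fin 2 → ℝ) (i j : Fin 2) : ℝ :=
  if j = 0 then p * g (i + 1) 0 + (1 - p) * g (i + 1) 1 else g (i + 1) 0

lemma typeStep_neg_one_pow_left (p : ℝ) (i j : Fin 2) :
    typeStep p (fun i _ => (-1) ^ (i : ℕ)) i j = -(-1) ^ (i : ℕ) := by
  fin_cases i <;> fin_cases j <;> simp [typeStep]
  ring

lemma typeStep_neg_one_pow_right (p : ℝ) (i j : Fin 2) :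
    typeStep p (fun _ j => (-1) ^ (j : ℕ)) i j = p - (1 - p) * (-1) ^ (j : ℕ) := by
  fin_cases j <;> simp [typeStep]
  ring

lemma typeStep_neg_one_pow_mul (p : ℝ) (i j : Fin 2) :
    typeStep p (fun i j => (-1) ^ (i : ℕ) * (-1) ^ (j : ℕ)) i j =
      (1 - p) * ((-1) ^ (i : ℕ) * (-1) ^ (j : ℕ)) - p * (-1) ^ (i : ℕ) := by
  fin_cases i <;> fin_cases j <;> simp [typeStep] <;> ring

end TypeFunctions

section Transition

variable {a h p α : ℝ} {q : Fin 2 → Fin 2 → Fin 3 → ℝ}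

/-- The one-step transition operator of the random walk on graphite: `transition a h p α q f x` is
the mean of `f` after one step from the lattice point `x`; it is `0` at points off the lattice. -/
def transition (a h p α : ℝ) (q : Fin 2 → Fin 2 → Fin 3 → ℝ) (f : E → ℝ) (x : E) : ℝ :=
  ∑ i : Fin 2,
    ((V a h i 0).indicator (fun _ => (1 : ℝ)) x *
      (α * p * f (x + vec 0 0 h) + (1 - α) * p * f (x + vec 0 0 (-h)) +
        ∑ k : Fin 3, q i 0 k * f (x + w a i k)) +
    (V a h i 1).indicator (fun _ => (1 : ℝ)) x *
      ∑ k : Fin 3, q i 1 k * f (x + w a i k))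

lemma transition_typeFun (ha : a ≠ 0) (hh : h ≠ 0) (hq0 : ∀ i, ∑ k, q i 0 k = 1 - p)
    (hq1 : ∀ i, ∑ k, q i 1 k = 1) (g : Fin 2 → Fin 2 → ℝ) (x : E) :
    transition a h p α q (typeFun a h g) x = typeFun a h (typeStep p g) x := by
  refine Finset.sum_congr rfl fun i _ => ?_
  rw [Fin.sum_univ_two]
  congr 1
  · by_cases hx : x ∈ V a h i 0
    · simp only [typeFun_of_mem ha hh g (add_up_mem_V hx),
        typeFun_of_mem ha hh g (add_down_mem_V hx), typeFun_of_mem ha hh g (add_w_mem_V hx _),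
        ← Finset.sum_mul, hq0, typeStep, if_pos, zero_add]
      ring
    · simp [hx]
  · by_cases hx : x ∈ V a h i 1
    · simp [typeFun_of_mem ha hh g (add_w_mem_V hx _), ← Finset.sum_mul, hq1, typeStep]
    · simp [hx]

end Transition

section IndicatorProcesses

variable {Ω : Type} {a h : ℝ}

lemma indicator_V_union (ha : a ≠ 0) (hh : h ≠ 0) {i j i' j' : Fin 2}
    (hne : ¬(i = i' ∧ j = j')) (x : E) :
    (V a h i j ∪ V a h i' j').indicator (fun _ => (1 : ℝ)) x =
      (V a h i j).indicator (fun _ => 1) x + (V a h i' j').indicator (fun _ => 1) x :=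
  congrFun (Set.indicator_union_of_disjoint (disjoint_V ha hh hne) _) x

lemma iP_eq_typeFun (ha : a ≠ 0) (hh : h ≠ 0) (S : ℕ → Ω → E) (n : ℕ) (ω : Ω) :
    iP a h S n ω = typeFun a h (fun i _ => (-1) ^ (i : ℕ)) (S n ω) := by
  rw [iP, indicator_V_union ha hh (by simp), indicator_V_union ha hh (by simp)]
  simp only [typeFun, Fin.sum_univ_two, Fin.val_zero, Fin.val_one]
  ring

lemma jP_eq_typeFun (ha : a ≠ 0) (hh : h ≠ 0) (S : ℕ → Ω → E) (n : ℕ) (ω : Ω) :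
    jP a h S n ω = typeFun a h (fun _ j => (-1) ^ (j : ℕ)) (S n ω) := by
  rw [jP, indicator_V_union ha hh (by simp), indicator_V_union ha hh (by simp)]
  simp only [typeFun, Fin.sum_univ_two, Fin.val_zero, Fin.val_one]
  ring

lemma kP_eq_typeFun (ha : a ≠ 0) (hh : h ≠ 0) (S : ℕ → Ω → E) (n : ℕ) (ω : Ω) :
    kP a h S n ω = typeFun a h (fun i j => (-1) ^ (i : ℕ) * (-1) ^ (j : ℕ)) (S n ω) := by
  rw [kP, indicator_V_union ha hh (by simp), indicator_V_union ha hh (by simp)]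
  simp only [typeFun, Fin.sum_univ_two, Fin.val_zero, Fin.val_one]
  ring

variable {S : ℕ → Ω → E} {n : ℕ} {ω : Ω} {i j : Fin 2}

lemma iP_of_mem (ha : a ≠ 0) (hh : h ≠ 0) (hS : S n ω ∈ V a h i j) :
    iP a h S n ω = (-1) ^ (i : ℕ) := by
  rw [iP_eq_typeFun ha hh, typeFun_of_mem ha hh _ hS]

lemma jP_of_mem (ha : a ≠ 0) (hh : h ≠ 0) (hS : S n ω ∈ V a h i j) :
    jP a h S n ω = (-1) ^ (j : ℕ) := by
  rw [jP_eq_typeFun ha hh, typeFun_of_mem ha hh _ hS]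

lemma kP_of_mem (ha : a ≠ 0) (hh : h ≠ 0) (hS : S n ω ∈ V a h i j) :
    kP a h S n ω = (-1) ^ (i : ℕ) * (-1) ^ (j : ℕ) := by
  rw [kP_eq_typeFun ha hh, typeFun_of_mem ha hh _ hS]

lemma exists_mem_V_of_iP_ne_zero (hi : iP a h S n ω ≠ 0) : ∃ i j, S n ω ∈ V a h i j := by
  contrapose! hi
  simp [iP, hi]

lemma mul_indicator_processes_of_mem (ha : a ≠ 0) (hh : h ≠ 0) (hS : S n ω ∈ V a h i j) :
    iP a h S n ω * jP a h S n ω = kP a h S n ω ∧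
      jP a h S n ω * kP a h S n ω = iP a h S n ω ∧
      iP a h S n ω * kP a h S n ω = jP a h S n ω := by
  rw [iP_of_mem ha hh hS, jP_of_mem ha hh hS, kP_of_mem ha hh hS]
  fin_cases i <;> fin_cases j <;> simp

end IndicatorProcesses

/-- A process on `ℝ³` started in `V 0 0 ∪ V 0 1` that moves by the transitions of the random walk
on graphite relative to sub-σ-algebras `F n`, which may carry more or less information than the
increments of `S`. -/
structure IsGraphiteWalk {Ω : Type} [MeasurableSpace Ω] (P : Measure Ω) (a h p α : ℝ)
    (q : Fin 2 → Fin 2 → Fin 3 → ℝ) (S : ℕ → Ω → E) (F : ℕ → MeasurableSpace Ω) : Prop where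
  sum_zero : ∀ i, ∑ k, q i 0 k = 1 - p
  sum_one : ∀ i, ∑ k, q i 1 k = 1
  initial : ∀ᵐ ω ∂P, S 0 ω ∈ V a h 0 0 ∪ V a h 0 1
  measurable : ∀ n, Measurable (S n)
  le : ∀ n, F n ≤ ‹MeasurableSpace Ω›
  condExp_comp : ∀ (n : ℕ) (f : E → ℝ), Measurable f → (∃ C, ∀ x, |f x| ≤ C) →
    P[fun ω => f (S (n + 1) ω)|F n] =ᵐ[P] fun ω => transition a h p α q f (S n ω)

section Walk

variable {Ω : Type} [MeasurableSpace Ω] {P : Measure Ω} {a h p α : ℝ}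
  {q : Fin 2 → Fin 2 → Fin 3 → ℝ} {S : ℕ → Ω → E} {F : ℕ → MeasurableSpace Ω}

lemma IsRWG.isGraphiteWalk (hS : IsRWG P a h p α q S F) : IsGraphiteWalk P a h p α q S F where
  sum_zero i := by rw [Fin.sum_univ_three, hS.hqsum0]
  sum_one i := by rw [Fin.sum_univ_three, hS.hqsum1]
  initial := .of_forall fun ω => by rw [hS.hS0]; exact .inl (zero_mem_V a h)
  measurable := hS.hSmeas
  le n := by
    rw [hS.hF]
    exact (measurable_pi_lambda _ fun _ => (hS.hSmeas _).sub (hS.hSmeas _)).comap_le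
  condExp_comp := hS.hTrans

namespace IsGraphiteWalk

lemma condExp_typeFun (hS : IsGraphiteWalk P a h p α q S F) (ha : a ≠ 0) (hh : h ≠ 0) (n : ℕ)
    (g : Fin 2 → Fin 2 → ℝ) :
    P[fun ω => typeFun a h g (S (n + 1) ω)|F n] =ᵐ[P]
      fun ω => typeFun a h (typeStep p g) (S n ω) := by
  have hbound : ∃ C, ∀ x, |typeFun a h g x| ≤ C := by
    obtain ⟨C, hC⟩ := Finite.exists_le fun ij : Fin 2 × Fin 2 => |g ij.1 ij.2|
    exact ⟨C, abs_typeFun_le ha hh fun i j => hC (i, j)⟩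
  simpa only [transition_typeFun ha hh hS.sum_zero hS.sum_one]
    using hS.condExp_comp n _ (measurable_typeFun a h g) hbound

lemma condExp_iP (hS : IsGraphiteWalk P a h p α q S F) (ha : a ≠ 0) (hh : h ≠ 0) (n : ℕ) :
    P[fun ω => iP a h S (n + 1) ω|F n] =ᵐ[P] fun ω => -iP a h S n ω := by
  simp only [iP_eq_typeFun ha hh]
  filter_upwards [hS.condExp_typeFun ha hh n _] with ω hstep
  rw [hstep]
  simp only [typeFun, typeStep_neg_one_pow_left, mul_neg, Finset.sum_neg_distrib]

lemma iP_ae_eq [IsFiniteMeasure P] (hS : IsGraphiteWalk P a h p α q S F) (ha : a ≠ 0)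
    (hh : h ≠ 0) (n : ℕ) : ∀ᵐ ω ∂P, iP a h S n ω = (-1) ^ n := by
  induction n with
  | zero =>
    filter_upwards [hS.initial] with ω hω
    rcases hω with hω | hω <;> simp [iP_of_mem ha hh hω]
  | succ n ih =>
    have hmeas : Measurable fun ω => iP a h S (n + 1) ω := by
      simp only [iP_eq_typeFun ha hh]
      exact (measurable_typeFun a h _).comp (hS.measurable (n + 1))
    have hbound (ω : Ω) : |iP a h S (n + 1) ω| ≤ |(-1) ^ (n + 1)| := by
      rw [iP_eq_typeFun ha hh, abs_neg_one_pow]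
      exact abs_typeFun_le ha hh (by simp) _
    refine ae_eq_const_of_abs_le_of_condExp_ae_eq (hS.le n) hmeas.aestronglyMeasurable
      (.of_forall hbound) ?_
    filter_upwards [hS.condExp_iP ha hh n, ih] with ω hstep hω
    rw [hstep, hω, pow_succ, mul_neg_one]

lemma ae_exists_mem_V [IsFiniteMeasure P] (hS : IsGraphiteWalk P a h p α q S F) (ha : a ≠ 0)
    (hh : h ≠ 0) (n : ℕ) : ∀ᵐ ω ∂P, ∃ i j, S n ω ∈ V a h i j := by
  filter_upwards [hS.iP_ae_eq ha hh n] with ω hω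
  exact exists_mem_V_of_iP_ne_zero (hω ▸ pow_ne_zero n (by norm_num))

lemma condExp_jP [IsFiniteMeasure P] (hS : IsGraphiteWalk P a h p α q S F) (ha : a ≠ 0)
    (hh : h ≠ 0) (n : ℕ) :
    P[fun ω => jP a h S (n + 1) ω|F n] =ᵐ[P] fun ω => p - (1 - p) * jP a h S n ω := by
  simp only [jP_eq_typeFun ha hh]
  filter_upwards [hS.condExp_typeFun ha hh n _, hS.ae_exists_mem_V ha hh n]
    with ω hstep ⟨i, j, hij⟩
  rw [hstep, typeFun_of_mem ha hh _ hij, typeFun_of_mem ha hh _ hij, typeStep_neg_one_pow_right]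

lemma condExp_kP [IsFiniteMeasure P] (hS : IsGraphiteWalk P a h p α q S F) (ha : a ≠ 0)
    (hh : h ≠ 0) (n : ℕ) :
    P[fun ω => kP a h S (n + 1) ω|F n] =ᵐ[P]
      fun ω => (1 - p) * kP a h S n ω - p * iP a h S n ω := by
  simp only [kP_eq_typeFun ha hh, iP_eq_typeFun ha hh]
  filter_upwards [hS.condExp_typeFun ha hh n _, hS.ae_exists_mem_V ha hh n]
    with ω hstep ⟨i, j, hij⟩
  rw [hstep]
  simp only [typeFun_of_mem ha hh _ hij, typeStep_neg_one_pow_mul]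

end IsGraphiteWalk

end Walk

end RWG

theorem rwg_indicator_structure_general {Ω : Type} [MeasurableSpace Ω] {P : Measure Ω}
    [IsFiniteMeasure P] {a h p α : ℝ} {q : Fin 2 → Fin 2 → Fin 3 → ℝ}
    {S : ℕ → Ω → RWG.E} {F : ℕ → MeasurableSpace Ω} (ha : a ≠ 0) (hh : h ≠ 0)
    (hS : RWG.IsGraphiteWalk P a h p α q S F) :
    (∀ n : ℕ, ∀ᵐ ω ∂P,
      RWG.iP a h S n ω = (-1 : ℝ) ^ n ∧
      RWG.iP a h S n ω * RWG.jP a h S n ω = RWG.kP a h S n ω ∧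
      RWG.jP a h S n ω * RWG.kP a h S n ω = RWG.iP a h S n ω ∧
      RWG.iP a h S n ω * RWG.kP a h S n ω = RWG.jP a h S n ω) ∧
    (∀ n : ℕ,
      (P[fun ω => RWG.jP a h S (n + 1) ω|F n] =ᵐ[P]
        fun ω => p - (1 - p) * RWG.jP a h S n ω) ∧
      (P[fun ω => RWG.kP a h S (n + 1) ω|F n] =ᵐ[P]
        fun ω => (1 - p) * RWG.kP a h S n ω - p * RWG.iP a h S n ω)) := by
  refine ⟨fun n => ?_, fun n => ⟨hS.condExp_jP ha hh n, hS.condExp_kP ha hh n⟩⟩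
  filter_upwards [hS.iP_ae_eq ha hh n, hS.ae_exists_mem_V ha hh n] with ω hi ⟨i, j, hij⟩
  exact ⟨hi, RWG.mul_indicator_processes_of_mem ha hh hij⟩

theorem rwg_indicator_structure {Ω : Type} [MeasurableSpace Ω] (P : Measure Ω)
    (a h p α : ℝ) (q : Fin 2 → Fin 2 → Fin 3 → ℝ)
    (S : ℕ → Ω → RWG.E) (F : ℕ → MeasurableSpace Ω)
    (hRW : RWG.IsRWG P a h p α q S F) :
    (∀ n : ℕ, ∀ᵐ ω ∂P,
      RWG.iP a h S n ω = (-1 : ℝ) ^ n ∧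
      RWG.iP a h S n ω * RWG.jP a h S n ω = RWG.kP a h S n ω ∧
      RWG.jP a h S n ω * RWG.kP a h S n ω = RWG.iP a h S n ω ∧
      RWG.iP a h S n ω * RWG.kP a h S n ω = RWG.jP a h S n ω) ∧
    (∀ n : ℕ,
      (P[fun ω => RWG.jP a h S (n + 1) ω|F n] =ᵐ[P]
        fun ω => p - (1 - p) * RWG.jP a h S n ω) ∧
      (P[fun ω => RWG.kP a h S (n + 1) ω|F n] =ᵐ[P]
        fun ω => (1 - p) * RWG.kP a h S n ω - p * RWG.iP a h S n ω)) := by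
  have := hRW.prob
  exact rwg_indicator_structure_general hRW.ha.ne' hRW.hh.ne' hRW.isGraphiteWalk
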